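/- Consider a finite event trace (a list of events) satisfying: (i) the values of watermark events are nondecreasing along the trace; (ii) whenever a watermark event wm w precedes an event emb τ n in the trace, τ + L ≥ w; and (iii) after every prefix of the trace and for every τ, the pending count pend(τ) = (sum of n over emb τ n events in the prefix) − (number of suc τ events in the prefix) is nonnegative. Then, running the stream algorithm of Listing 3 with lateness parameter L over the trace, for every prefix, every watermark value W forwarded by the algorithm within that prefix and every timestamp τ with pend(τ) > 0 at the end of that prefix satisfy W ≤ τ + L: the algorithm enforces condition C2, i.e., a forwarded watermark never exceeds by more than the allowed lateness L the timestamp of any loop successor tuple that is still pending (Lemma 3). -/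

import Mathlib

/-- Events on the stream `S_E` feeding the first Aggregate `A₁` of the Unfold
operator: `emb τ n` is a tuple output by the Embed operator at timestamp `τ`
whose carried list announces `n` loop successors, `suc τ` is a looped
successor tuple with timestamp `τ`, and `wm w` is a watermark of value `w`. -/
inductive SEEvent : Type
  | emb (τ n : ℕ)
  | suc (τ : ℕ)
  | wm (w : ℕ)
deriving DecidableEq

/-- Pending count at timestamp `τ` after a prefix of events:
(sum of `n` over `emb τ n` events) − (number of `suc τ` events). -/
def pendZ (pre : List SEEvent) (τ : ℕ) : ℤ :=
  (pre.map (fun e =>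
    match e with
    | .emb τ' n => if τ' = τ then (n : ℤ) else 0
    | .suc τ' => if τ' = τ then (-1 : ℤ) else 0
    | .wm _ => 0)).sum

/-- The watermark values occurring in a trace, in order. -/
def wmValues (tr : List SEEvent) : List ℕ :=
  tr.filterMap (fun e => match e with | .wm w => some w | _ => none)

/-- State of the algorithm of Listing 3: the pending successor counts (a key
is absent iff its count is `0`), the bound `B ∈ ℕ ∪ {⊤}` on the watermarks
that may be forwarded, the FIFO queue of withheld watermarks, and the list of
watermarks forwarded so far. -/
structure C2State where
  pend : ℕ → ℕ
  B : WithTop ℕ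
  queue : List ℕ
  out : List ℕ

open scoped Classical in
/-- Common part of processing a tuple event in Listing 3: after updating the
pending counts to `pend'`, set `B` to (the least `τ` with `pend' τ > 0`) `+ L`
if such a `τ` exists and to `⊤` otherwise, then forward the most recently
queued watermark whose value is `≤ B`, discarding earlier queued ones. -/
noncomputable def afterTuple (L : ℕ) (s : C2State) (pend' : ℕ → ℕ) : C2State :=
  let B' : WithTop ℕ :=
    if _ : ∃ τ, 0 < pend' τ then ((sInf {τ | 0 < pend' τ} + L : ℕ) : WithTop ℕ)
    else ⊤
  let fwd := s.queue.takeWhile (fun w : ℕ => decide ((w : WithTop ℕ) ≤ B'))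
  { pend := pend'
    B := B'
    queue := s.queue.dropWhile (fun w : ℕ => decide ((w : WithTop ℕ) ≤ B'))
    out := s.out ++ (match fwd.getLast? with | some w => [w] | none => []) }

/-- One step of the algorithm of Listing 3: on `emb τ n` add `n` to the
pending count at key `τ`; on `suc τ` subtract `1` (the key is removed when it
reaches `0`); on a watermark `wm w`, forward `w` immediately if `w ≤ B` and
enqueue it otherwise. -/
noncomputable def c2Step (L : ℕ) (s : C2State) (e : SEEvent) : C2State :=
  match e with
  | .emb τ n => afterTuple L s (Function.update s.pend τ (s.pend τ + n))
  | .suc τ => afterTuple L s (Function.update s.pend τ (s.pend τ - 1))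
  | .wm w =>
      if (w : WithTop ℕ) ≤ s.B then { s with out := s.out ++ [w] }
      else { s with queue := s.queue ++ [w] }

/-- Running the algorithm of Listing 3 over a trace, starting with all
pending counts `0`, `B = ⊤`, an empty queue and no forwarded watermarks. -/
noncomputable def c2Run (L : ℕ) (tr : List SEEvent) : C2State :=
  tr.foldl (c2Step L) ⟨fun _ => 0, ⊤, [], []⟩

/-!
The bound `B` never exceeds `τ + L` for a timestamp `τ` pending in the current state, and a step
forwards only watermarks that are at most the bound in force after it. So a watermark is safe for
every pending timestamp at the moment it is forwarded. Afterwards the only event that can make a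
new timestamp `τ` pending is some `emb τ n`, and since every forwarded watermark has already
occurred in the trace, the lateness condition on `emb` events bounds it by `τ + L`.
-/

section Step

variable {L τ w : ℕ} {s : C2State} {e : SEEvent}

lemma afterTuple_B_le {p : ℕ → ℕ} (hτ : 0 < p τ) :
    (afterTuple L s p).B ≤ ((τ + L : ℕ) : WithTop ℕ) := by
  have h_least : sInf {σ | 0 < p σ} ≤ τ := Nat.sInf_le hτ
  have h_ex : ∃ σ, 0 < p σ := ⟨τ, hτ⟩
  simp only [afterTuple, dif_pos h_ex]
  exact_mod_cast Nat.add_le_add_right h_least L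

lemma mem_queue_of_mem_queue_afterTuple {p : ℕ → ℕ} (hw : w ∈ (afterTuple L s p).queue) :
    w ∈ s.queue :=
  (List.dropWhile_suffix _).subset hw

lemma mem_out_afterTuple {p : ℕ → ℕ} (hw : w ∈ (afterTuple L s p).out) :
    w ∈ s.out ∨ w ∈ s.queue ∧ (w : WithTop ℕ) ≤ (afterTuple L s p).B := by
  rcases List.mem_append.1 hw with h_old | h_new
  · exact .inl h_old
  · right
    split at h_new
    case h_1 v h_last =>
      obtain rfl := List.mem_singleton.1 h_new
      have h_fwd := List.mem_of_getLast? h_last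
      have h_le_B : (w : WithTop ℕ) ≤ (afterTuple L s p).B := by
        simpa only [afterTuple, decide_eq_true_eq] using List.mem_takeWhile_imp h_fwd
      exact ⟨(List.takeWhile_prefix _).subset h_fwd, h_le_B⟩
    case h_2 => exact absurd h_new List.not_mem_nil

lemma c2Step_B_le (hs : ∀ σ, 0 < s.pend σ → s.B ≤ ((σ + L : ℕ) : WithTop ℕ))
    (hτ : 0 < (c2Step L s e).pend τ) : (c2Step L s e).B ≤ ((τ + L : ℕ) : WithTop ℕ) := by
  cases e with
  | emb _ _ => exact afterTuple_B_le hτ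
  | suc _ => exact afterTuple_B_le hτ
  | wm v =>
    simp only [c2Step] at hτ ⊢
    split_ifs at hτ ⊢ <;> exact hs τ hτ

lemma mem_out_c2Step (hw : w ∈ (c2Step L s e).out) :
    w ∈ s.out ∨ (w : WithTop ℕ) ≤ (c2Step L s e).B := by
  cases e with
  | emb _ _ => exact (mem_out_afterTuple hw).imp_right And.right
  | suc _ => exact (mem_out_afterTuple hw).imp_right And.right
  | wm v =>
    by_cases hB : (v : WithTop ℕ) ≤ s.B
    · simp only [c2Step, if_pos hB, List.mem_append, List.mem_singleton] at hw ⊢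
      rcases hw with h_old | rfl
      · exact .inl h_old
      · exact .inr hB
    · simp only [c2Step, if_neg hB] at hw
      exact .inl hw

lemma mem_queue_or_mem_out_c2Step (hw : w ∈ (c2Step L s e).queue ∨ w ∈ (c2Step L s e).out) :
    (w ∈ s.queue ∨ w ∈ s.out) ∨ e = .wm w := by
  have of_afterTuple {p : ℕ → ℕ}
      (h : w ∈ (afterTuple L s p).queue ∨ w ∈ (afterTuple L s p).out) :
      w ∈ s.queue ∨ w ∈ s.out :=
    h.elim (fun h => .inl (mem_queue_of_mem_queue_afterTuple h))
      fun h => (mem_out_afterTuple h).elim .inr fun h => .inl h.1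
  cases e with
  | emb _ _ => exact .inl (of_afterTuple hw)
  | suc _ => exact .inl (of_afterTuple hw)
  | wm v =>
    simp only [c2Step] at hw
    split at hw <;> grind

lemma pend_pos_or_eq_emb_of_c2Step (hτ : 0 < (c2Step L s e).pend τ) :
    0 < s.pend τ ∨ ∃ n, e = .emb τ n := by
  cases e with
  | emb σ n =>
    by_cases h_eq : τ = σ
    · exact .inr ⟨n, h_eq ▸ rfl⟩
    · simp only [c2Step, afterTuple, Function.update_of_ne h_eq] at hτ
      exact .inl hτ
  | suc σ =>
    simp only [c2Step, afterTuple, Function.update_apply] at hτ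
    grind
  | wm v =>
    simp only [c2Step] at hτ
    split at hτ <;> exact .inl hτ

end Step

section Run

variable {L τ w : ℕ} {tr : List SEEvent}

lemma c2Run_append_singleton (e : SEEvent) :
    c2Run L (tr ++ [e]) = c2Step L (c2Run L tr) e :=
  List.foldl_concat ..

-- Only an inequality: `pend` truncates at `0` where `pendZ` becomes negative.
lemma pendZ_le_pend_c2Run : pendZ tr τ ≤ (c2Run L tr).pend τ := by
  induction tr using List.reverseRecOn with
  | nil => exact le_rfl
  | append_singleton tr e ih =>
    have h_pendZ : pendZ (tr ++ [e]) τ = pendZ tr τ + pendZ [e] τ := by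
      simp only [pendZ, List.map_append, List.sum_append]
    rw [h_pendZ, c2Run_append_singleton]
    cases e with
    | emb σ n =>
      simp only [pendZ, c2Step, afterTuple, Function.update_apply, List.map_cons, List.map_nil,
        List.sum_singleton] at ih ⊢
      grind
    | suc σ =>
      simp only [pendZ, c2Step, afterTuple, Function.update_apply, List.map_cons, List.map_nil,
        List.sum_singleton] at ih ⊢
      grind
    | wm v =>
      simp only [c2Step]
      split <;> simpa [pendZ] using ih

lemma c2Run_B_le (hτ : 0 < (c2Run L tr).pend τ) :
    (c2Run L tr).B ≤ ((τ + L : ℕ) : WithTop ℕ) := by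
  induction tr using List.reverseRecOn generalizing τ with
  | nil => exact absurd hτ (lt_irrefl 0)
  | append_singleton tr e ih =>
    rw [c2Run_append_singleton] at hτ ⊢
    exact c2Step_B_le (fun _ => ih) hτ

lemma wm_mem_of_mem_queue_or_mem_out_c2Run
    (hw : w ∈ (c2Run L tr).queue ∨ w ∈ (c2Run L tr).out) : .wm w ∈ tr := by
  induction tr using List.reverseRecOn with
  | nil => exact absurd (hw.elim id id) List.not_mem_nil
  | append_singleton tr e ih =>
    rw [c2Run_append_singleton] at hw
    rcases mem_queue_or_mem_out_c2Step hw with h_old | rfl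
    · exact List.mem_append_left _ (ih h_old)
    · exact List.mem_concat_self

lemma le_add_of_mem_out_c2Run_of_pend_pos {trace : List SEEvent}
    (h_wm_emb : ∀ (l₁ l₂ rest : List SEEvent) (w τ n : ℕ),
      trace = l₁ ++ SEEvent.wm w :: l₂ ++ SEEvent.emb τ n :: rest → τ + L ≥ w)
    (h_pre : tr <+: trace) (hw : w ∈ (c2Run L tr).out) (hτ : 0 < (c2Run L tr).pend τ) :
    w ≤ τ + L := by
  induction tr using List.reverseRecOn with
  | nil => exact absurd hw List.not_mem_nil
  | append_singleton tr e ih =>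
    have h_bound := c2Run_B_le hτ
    rw [c2Run_append_singleton] at hw hτ h_bound
    rcases mem_out_c2Step hw with h_old | h_new
    · rcases pend_pos_or_eq_emb_of_c2Step hτ with h_pend | ⟨n, rfl⟩
      · exact ih ((List.prefix_append tr [e]).trans h_pre) h_old h_pend
      · obtain ⟨l₁, l₂, rfl⟩ :=
          List.append_of_mem (wm_mem_of_mem_queue_or_mem_out_c2Run (.inr h_old))
        obtain ⟨rest, h_trace⟩ := h_pre
        exact h_wm_emb l₁ l₂ rest w τ n (by rw [← h_trace, List.append_assoc _ [_]]; rfl)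
    · exact_mod_cast h_new.trans h_bound

end Run

theorem listing3_enforces_C2_general (L : ℕ) (trace : List SEEvent)
    (h_wm_emb : ∀ (l₁ l₂ rest : List SEEvent) (w τ n : ℕ),
      trace = l₁ ++ SEEvent.wm w :: l₂ ++ SEEvent.emb τ n :: rest → τ + L ≥ w) :
    ∀ pre, pre <+: trace → ∀ W ∈ (c2Run L pre).out, ∀ τ : ℕ,
      0 < pendZ pre τ → W ≤ τ + L := by
  intro pre h_pre W hW τ hτ
  have h_pend : 0 < (c2Run L pre).pend τ := by exact_mod_cast hτ.trans_le pendZ_le_pend_c2Run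
  exact le_add_of_mem_out_c2Run_of_pend_pos h_wm_emb h_pre hW h_pend

/-- Lemma 3: over any trace in which (i) watermark values are nondecreasing,
(ii) a watermark `wm w` preceding an `emb τ n` event satisfies `τ + L ≥ w`,
and (iii) all pending counts stay nonnegative after every prefix, the
algorithm of Listing 3 enforces condition C2: for every prefix, every
watermark `W` forwarded within that prefix and every timestamp `τ` still
pending at the end of that prefix satisfy `W ≤ τ + L`. -/
theorem listing3_enforces_C2 (L : ℕ) (trace : List SEEvent)
    (h_wm_mono : (wmValues trace).Pairwise (· ≤ ·))
    (h_wm_emb : ∀ (l₁ l₂ rest : List SEEvent) (w τ n : ℕ),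
      trace = l₁ ++ SEEvent.wm w :: l₂ ++ SEEvent.emb τ n :: rest → τ + L ≥ w)
    (h_pend_nonneg : ∀ pre, pre <+: trace → ∀ τ, 0 ≤ pendZ pre τ) :
    ∀ pre, pre <+: trace → ∀ W ∈ (c2Run L pre).out, ∀ τ : ℕ,
      0 < pendZ pre τ → W ≤ τ + L := by
  exact listing3_enforces_C2_general L trace h_wm_emb
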